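/- For 0 ≤ d ≤ 2 let α* = arcsin(d/2), Ξ(d) = [0,π] × [α*, π−α*], and define A(d) = sup{ min(L(d,σ,δ), R(d,σ,δ)) : (σ,δ) ∈ Ξ(d) }, where L(d,σ,δ) = 2π − 4·arcsin(d_L(d,σ,δ)/4) + 2δ and R(d,σ,δ) = 4π − 4·arcsin(d_R(d,σ,δ)/4) − 2δ. Then on the interval [0, √2] the function d ↦ A(d) is monotonically increasing and the function d ↦ A(d) − d is monotonically decreasing; moreover A(0) = 7π/3 and A(√2) = 5π/2. -/

import Mathlib

open Real

/-- Distance between the centers of the two left disks, in `(σ, δ)` coordinates. -/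
noncomputable def dL (d σ δ : ℝ) : ℝ :=
  Real.sqrt (d ^ 2 - 4 * d * Real.sin δ * Real.cos σ + 4 * Real.sin δ ^ 2)

/-- Distance between the centers of the two right disks, in `(σ, δ)` coordinates. -/
noncomputable def dR (d σ δ : ℝ) : ℝ :=
  Real.sqrt (d ^ 2 + 4 * d * Real.sin δ * Real.cos σ + 4 * Real.sin δ ^ 2)

/-- Length of the LRL-type bounded-curvature path. -/
noncomputable def Lfun (d σ δ : ℝ) : ℝ :=
  2 * π - 4 * Real.arcsin (dL d σ δ / 4) + 2 * δ

/-- Length of the RLR-type bounded-curvature path. -/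
noncomputable def Rfun (d σ δ : ℝ) : ℝ :=
  4 * π - 4 * Real.arcsin (dR d σ δ / 4) - 2 * δ

/-- Minimum of the LRL- and RLR-path lengths. -/
noncomputable def Cfun (d σ δ : ℝ) : ℝ :=
  min (Lfun d σ δ) (Rfun d σ δ)

/-- The supremum of `Cfun` over the rectangle `Ξ(d) = [0, π] × [α*, π - α*]`,
where `α* = arcsin (d/2)`. -/
noncomputable def Afun (d : ℝ) : ℝ :=
  sSup ((fun p : ℝ × ℝ => Cfun d p.1 p.2) ''
    (Set.Icc 0 π ×ˢ Set.Icc (Real.arcsin (d / 2)) (π - Real.arcsin (d / 2))))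

/-!
Increasing `δ` at `σ = 0` lengthens the LRL path, `σ = 0` is the best angle for it, and the
reflection `(σ, δ) ↦ (π - σ, π - δ)` exchanges the two path types. Near the middle `δ = π / 2` one
bounds the minimum by the average instead: by the parallelogram law `d_L² + d_R²` depends only on
`d` and `sin δ`, while `d_L d_R` is smallest at `σ = 0`, and these two quantities control
`arcsin (d_L / 4) + arcsin (d_R / 4)`. Hence `A(d)` is attained where `σ = 0` and both paths are
equally long.

Write the two arcsines at that balanced point as `m - h` and `m + h`. Equality of the lengths says
`δ = π / 2 - 2 h`, and the values of `d_L`, `d_R` give `2 sin m cos h = cos 2h`,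
`d = 4 cos m sin h` and `A(d) = 3π - 4m`. As `h` runs over `[0, π / 8]`, `d` increases from `0` to
`√2`, `m` decreases from `π / 6` to `π / 8`, and `d + 4m` increases.
-/

open Set

section General

lemma monotoneOn_of_monotoneOn_comp {α β γ : Type*} [LinearOrder α] [PartialOrder β] [Preorder γ]
    {p : α → β} {f : β → γ} {s : Set α} {t : Set β} (hp : MonotoneOn p s) (hst : SurjOn p s t)
    (hfp : MonotoneOn (f ∘ p) s) : MonotoneOn f t := by
  intro a ha b hb hab
  obtain ⟨x, hx, rfl⟩ := hst ha
  obtain ⟨y, hy, rfl⟩ := hst hb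
  rcases le_total x y with hxy | hyx
  · exact hfp hx hy hxy
  · exact (congrArg f (hab.antisymm (hp hy hx hyx))).le

lemma antitoneOn_of_antitoneOn_comp {α β γ : Type*} [LinearOrder α] [PartialOrder β] [Preorder γ]
    {p : α → β} {f : β → γ} {s : Set α} {t : Set β} (hp : MonotoneOn p s) (hst : SurjOn p s t)
    (hfp : AntitoneOn (f ∘ p) s) : AntitoneOn f t :=
  monotoneOn_of_monotoneOn_comp (γ := γᵒᵈ) hp hst hfp

lemma sin_le_sin_of_mem_Icc_pi_sub {a b : ℝ} (ha : -(π / 2) ≤ a) (hb : b ∈ Icc a (π - a)) :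
    sin a ≤ sin b := by
  rcases le_total b (π / 2) with h | h
  · exact sin_le_sin_of_le_of_le_pi_div_two ha h hb.1
  · rw [← sin_pi_sub b]
    exact sin_le_sin_of_le_of_le_pi_div_two ha (by linarith) (by linarith [hb.2])

lemma arcsin_add_arcsin_le_pi_div_two {x y : ℝ} (hx : 0 ≤ x) (hxy : x ^ 2 + y ^ 2 ≤ 1) :
    arcsin x + arcsin y ≤ π / 2 := by
  have hy : arcsin y ≤ arccos x := by
    rw [arccos_eq_arcsin hx]
    exact monotone_arcsin (le_sqrt_of_sq_le (by linarith))
  rw [arccos] at hy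
  linarith

lemma cos_add_mul_cos_sub (a b : ℝ) : cos (a + b) * cos (a - b) = 1 - sin a ^ 2 - sin b ^ 2 := by
  rw [cos_add, cos_sub]
  linear_combination cos a ^ 2 * sin_sq b + (1 - sin b ^ 2) * sin_sq a

/-- If the sum of arcsines decreased, then `cos (a + b)` and `cos (a - b) = cos (a + b) + 2xy` would
both increase, contradicting that their product is `1 - x² - y²`. -/
lemma arcsin_add_arcsin_le_arcsin_add_arcsin {x y x' y' : ℝ} (hx : 0 ≤ x) (hy : 0 ≤ y)
    (hx' : 0 ≤ x') (hy' : 0 ≤ y') (hxy : x ^ 2 + y ^ 2 ≤ 1)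
    (hsq : x ^ 2 + y ^ 2 ≤ x' ^ 2 + y' ^ 2) (hmul : x * y ≤ x' * y') :
    arcsin x + arcsin y ≤ arcsin x' + arcsin y' := by
  by_contra! hlt
  have hle := arcsin_add_arcsin_le_pi_div_two hx hxy
  have ha := arcsin_nonneg.2 hx
  have hb := arcsin_nonneg.2 hy
  have ha' := arcsin_nonneg.2 hx'
  have hb' := arcsin_nonneg.2 hy'
  have sin_a : sin (arcsin x) = x := sin_arcsin (by linarith) (by nlinarith)
  have sin_b : sin (arcsin y) = y := sin_arcsin (by linarith) (by nlinarith)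
  have sin_a' : sin (arcsin x') = x' :=
    sin_arcsin (by linarith) (arcsin_lt_pi_div_two.1 (by linarith)).le
  have sin_b' : sin (arcsin y') = y' :=
    sin_arcsin (by linarith) (arcsin_lt_pi_div_two.1 (by linarith)).le
  have hprod := cos_add_mul_cos_sub (arcsin x) (arcsin y)
  have hprod' := cos_add_mul_cos_sub (arcsin x') (arcsin y')
  have hdiff := two_mul_sin_mul_sin (arcsin x) (arcsin y)
  have hdiff' := two_mul_sin_mul_sin (arcsin x') (arcsin y')
  rw [sin_a, sin_b] at hprod hdiff
  rw [sin_a', sin_b'] at hprod' hdiff'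
  have hadd : cos (arcsin x + arcsin y) < cos (arcsin x' + arcsin y') :=
    cos_lt_cos_of_nonneg_of_le_pi (by linarith) (by linarith) hlt
  have hsub : cos (arcsin x - arcsin y) < cos (arcsin x' - arcsin y') := by linarith
  have hadd_nonneg : 0 ≤ cos (arcsin x + arcsin y) :=
    cos_nonneg_of_mem_Icc ⟨by linarith, hle⟩
  have hsub_nonneg : 0 ≤ cos (arcsin x - arcsin y) :=
    cos_nonneg_of_mem_Icc ⟨by linarith, by linarith⟩
  linarith [mul_lt_mul'' hadd hsub hadd_nonneg hsub_nonneg]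

end General

section PathLengths

variable {d σ δ δ₀ : ℝ}

lemma dL_zero (d δ : ℝ) : dL d 0 δ = |2 * sin δ - d| := by
  rw [dL, cos_zero, ← sqrt_sq_eq_abs]
  congr 1
  ring

lemma dR_zero (d δ : ℝ) : dR d 0 δ = |2 * sin δ + d| := by
  rw [dR, cos_zero, ← sqrt_sq_eq_abs]
  congr 1
  ring

lemma dR_eq_dL_pi_sub (d σ δ : ℝ) : dR d σ δ = dL d (π - σ) (π - δ) := by
  rw [dR, dL, sin_pi_sub, cos_pi_sub]
  congr 1
  ring

lemma sq_dL (d σ δ : ℝ) : dL d σ δ ^ 2 = d ^ 2 - 4 * d * sin δ * cos σ + 4 * sin δ ^ 2 := by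
  refine sq_sqrt ?_
  have hsq := sq_nonneg (d - 2 * sin δ * cos σ)
  have hcos := mul_nonneg (sq_nonneg (sin δ)) (sub_nonneg.2 (cos_sq_le_one σ))
  linarith

lemma sq_dR (d σ δ : ℝ) : dR d σ δ ^ 2 = d ^ 2 + 4 * d * sin δ * cos σ + 4 * sin δ ^ 2 := by
  rw [dR_eq_dL_pi_sub, sq_dL, sin_pi_sub, cos_pi_sub]
  ring

lemma Rfun_eq_Lfun_pi_sub (d σ δ : ℝ) : Rfun d σ δ = Lfun d (π - σ) (π - δ) := by
  rw [Rfun, Lfun, dR_eq_dL_pi_sub]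
  ring

lemma four_mul_sin_sq_sub_sq_le_dL_mul_dR (d σ δ : ℝ) :
    4 * sin δ ^ 2 - d ^ 2 ≤ dL d σ δ * dR d σ δ := by
  refine le_of_sq_le_sq ?_ (mul_nonneg (sqrt_nonneg _) (sqrt_nonneg _))
  rw [mul_pow, sq_dL, sq_dR]
  have hcos := mul_nonneg (sq_nonneg (d * sin δ)) (sub_nonneg.2 (cos_sq_le_one σ))
  linarith

lemma Lfun_le_Lfun_zero (h : 0 ≤ d * sin δ) : Lfun d σ δ ≤ Lfun d 0 δ := by
  have hdist : dL d 0 δ ≤ dL d σ δ := by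
    refine sqrt_le_sqrt ?_
    have hcos := mul_le_mul_of_nonneg_left (cos_le_one σ) h
    rw [cos_zero]
    linarith
  have harcsin : arcsin (dL d 0 δ / 4) ≤ arcsin (dL d σ δ / 4) := monotone_arcsin (by linarith)
  rw [Lfun, Lfun]
  linarith

lemma half_le_sin_of_mem_Icc (hd₀ : 0 ≤ d) (hd₂ : d ≤ 2)
    (hδ : δ ∈ Icc (arcsin (d / 2)) (π - arcsin (d / 2))) : d / 2 ≤ sin δ := by
  calc d / 2 = sin (arcsin (d / 2)) := (sin_arcsin (by linarith) (by linarith)).symm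
    _ ≤ sin δ := sin_le_sin_of_mem_Icc_pi_sub (neg_pi_div_two_le_arcsin _) hδ

lemma hasDerivAt_two_mul_sub_four_mul_arcsin (hd : 0 ≤ d) (hδ : d / 2 ≤ sin δ) :
    HasDerivAt (fun δ => 2 * δ - 4 * arcsin ((2 * sin δ - d) / 4))
      (2 - 2 * (cos δ / √(1 - ((2 * sin δ - d) / 4) ^ 2))) δ := by
  have hsin := sin_le_one δ
  have hinner : HasDerivAt (fun δ => (2 * sin δ - d) / 4) (2 * cos δ / 4) δ :=
    (((hasDerivAt_sin δ).const_mul 2).sub_const d).div_const 4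
  have harcsin := (hasDerivAt_arcsin (by linarith) (by linarith)).comp δ hinner
  refine (((hasDerivAt_id δ).const_mul 2).sub (harcsin.const_mul 4)).congr_deriv ?_
  ring

lemma monotoneOn_Lfun_zero (hd₀ : 0 ≤ d) (hd₂ : d ≤ 2) :
    MonotoneOn (Lfun d 0) (Icc (arcsin (d / 2)) (π - arcsin (d / 2))) := by
  have hmono : MonotoneOn (fun δ => 2 * δ - 4 * arcsin ((2 * sin δ - d) / 4))
      (Icc (arcsin (d / 2)) (π - arcsin (d / 2))) := by
    refine monotoneOn_of_hasDerivWithinAt_nonneg (convex_Icc _ _) (by fun_prop)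
      (fun δ hδ => (hasDerivAt_two_mul_sub_four_mul_arcsin hd₀
        (half_le_sin_of_mem_Icc hd₀ hd₂ (interior_subset hδ))).hasDerivWithinAt)
      fun δ hδ => ?_
    have hsin := half_le_sin_of_mem_Icc hd₀ hd₂ (interior_subset hδ)
    have hcos : cos δ ≤ √(1 - ((2 * sin δ - d) / 4) ^ 2) := by
      refine le_sqrt_of_sq_le ?_
      rw [cos_sq']
      have := pow_le_pow_left₀ (by linarith) (by linarith : (2 * sin δ - d) / 4 ≤ sin δ) 2
      linarith
    linarith [div_le_one_of_le₀ hcos (sqrt_nonneg _)]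
  intro a ha b hb hab
  have h := hmono ha hb hab
  have hsin_a := half_le_sin_of_mem_Icc hd₀ hd₂ ha
  have hsin_b := half_le_sin_of_mem_Icc hd₀ hd₂ hb
  rw [Lfun, Lfun, dL_zero, dL_zero, abs_of_nonneg (by linarith), abs_of_nonneg (by linarith)]
  linarith

lemma Lfun_add_Rfun_le_Lfun_zero_add_Rfun_zero (hd₀ : 0 ≤ d) (hd₂ : d ≤ 2)
    (hδ₀ : d / 2 ≤ sin δ₀) (hδ : sin δ₀ ≤ sin δ) :
    Lfun d σ δ + Rfun d σ δ ≤ Lfun d 0 δ₀ + Rfun d 0 δ₀ := by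
  have hsin_sq : sin δ₀ ^ 2 ≤ sin δ ^ 2 := pow_le_pow_left₀ (by linarith) hδ 2
  have harcsin := arcsin_add_arcsin_le_arcsin_add_arcsin
    (x := dL d 0 δ₀ / 4) (y := dR d 0 δ₀ / 4) (x' := dL d σ δ / 4) (y' := dR d σ δ / 4)
    (div_nonneg (sqrt_nonneg _) (by norm_num)) (div_nonneg (sqrt_nonneg _) (by norm_num))
    (div_nonneg (sqrt_nonneg _) (by norm_num)) (div_nonneg (sqrt_nonneg _) (by norm_num))
    (by
      rw [div_pow, div_pow, sq_dL, sq_dR]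
      nlinarith [sin_sq_le_one δ₀])
    (by
      rw [div_pow, div_pow, div_pow, div_pow, sq_dL, sq_dR, sq_dL, sq_dR]
      linarith)
    (by
      rw [dL_zero, dR_zero, abs_of_nonneg (by linarith), abs_of_nonneg (by linarith)]
      linarith [four_mul_sin_sq_sub_sq_le_dL_mul_dR d σ δ])
  simp only [Lfun, Rfun]
  linarith

lemma Cfun_le_of_Lfun_eq_Rfun (hd₀ : 0 ≤ d) (hd₂ : d ≤ 2)
    (hδ₀ : δ₀ ∈ Icc (arcsin (d / 2)) (π / 2)) (hLR : Lfun d 0 δ₀ = Rfun d 0 δ₀)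
    (hδ : δ ∈ Icc (arcsin (d / 2)) (π - arcsin (d / 2))) : Cfun d σ δ ≤ Lfun d 0 δ₀ := by
  have hδ₀_mem : δ₀ ∈ Icc (arcsin (d / 2)) (π - arcsin (d / 2)) :=
    ⟨hδ₀.1, by linarith [hδ₀.2, arcsin_le_pi_div_two (d / 2)]⟩
  have hL {σ' δ' : ℝ} (hδ' : δ' ∈ Icc (arcsin (d / 2)) (π - arcsin (d / 2))) (hle : δ' ≤ δ₀) :
      Lfun d σ' δ' ≤ Lfun d 0 δ₀ := by
    have hsin := half_le_sin_of_mem_Icc hd₀ hd₂ hδ'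
    exact (Lfun_le_Lfun_zero (mul_nonneg hd₀ (by linarith))).trans
      (monotoneOn_Lfun_zero hd₀ hd₂ hδ' hδ₀_mem hle)
  rcases le_total δ δ₀ with hlow | hlow
  · exact (min_le_left _ _).trans (hL hδ hlow)
  rcases le_total δ (π - δ₀) with hmid | hhigh
  · have hsin₀ := half_le_sin_of_mem_Icc hd₀ hd₂ hδ₀_mem
    have hsin : sin δ₀ ≤ sin δ := sin_le_sin_of_mem_Icc_pi_sub
      ((neg_pi_div_two_le_arcsin _).trans hδ₀.1) ⟨hlow, hmid⟩
    have hsum := Lfun_add_Rfun_le_Lfun_zero_add_Rfun_zero (σ := σ) hd₀ hd₂ hsin₀ hsin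
    rw [Cfun]
    linarith [min_le_left (Lfun d σ δ) (Rfun d σ δ), min_le_right (Lfun d σ δ) (Rfun d σ δ)]
  · refine (min_le_right _ _).trans ?_
    rw [Rfun_eq_Lfun_pi_sub]
    exact hL ⟨by linarith [hδ.2], by linarith [hδ.1]⟩ (by linarith)

theorem Afun_eq_of_Lfun_eq_Rfun (hd₀ : 0 ≤ d) (hd₂ : d ≤ 2)
    (hδ₀ : δ₀ ∈ Icc (arcsin (d / 2)) (π / 2)) (hLR : Lfun d 0 δ₀ = Rfun d 0 δ₀) :
    Afun d = Lfun d 0 δ₀ := by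
  refine IsGreatest.csSup_eq ⟨⟨(0, δ₀), ⟨⟨le_rfl, pi_nonneg⟩, hδ₀.1, ?_⟩, ?_⟩, ?_⟩
  · linarith [hδ₀.2, arcsin_le_pi_div_two (d / 2)]
  · exact min_eq_left hLR.le
  · rintro _ ⟨⟨σ, δ⟩, ⟨-, hδ⟩, rfl⟩
    exact Cfun_le_of_Lfun_eq_Rfun hd₀ hd₂ hδ₀ hLR hδ

end PathLengths

/-- The half-sum `m` of `arcsin (d_L / 4)` and `arcsin (d_R / 4)` at the balanced point, as a
function of their half-difference `h`; it solves `2 sin m cos h = cos 2h`. -/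
noncomputable def meanAngle (h : ℝ) : ℝ :=
  arcsin (cos (2 * h) / (2 * cos h))

/-- The distance `d` at whose balanced point `arcsin (d_L / 4)` and `arcsin (d_R / 4)` have
half-difference `h`. -/
noncomputable def balancedDist (h : ℝ) : ℝ :=
  4 * cos (meanAngle h) * sin h

section Parametrization

variable {h : ℝ}

lemma cos_pos_of_mem_Icc_pi_div_eight (hh : h ∈ Icc 0 (π / 8)) : 0 < cos h :=
  cos_pos_of_mem_Ioo ⟨by linarith [hh.1, pi_pos], by linarith [hh.2, pi_pos]⟩

lemma meanAngle_zero : meanAngle 0 = π / 6 := by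
  rw [meanAngle, mul_zero, cos_zero, mul_one, ← sin_pi_div_six]
  exact arcsin_sin (by linarith [pi_pos]) (by linarith [pi_pos])

lemma meanAngle_pi_div_eight : meanAngle (π / 8) = π / 8 := by
  have hpi := pi_pos
  have hcos := cos_pos_of_mem_Icc_pi_div_eight (right_mem_Icc.2 (by linarith))
  have hsin : cos (2 * (π / 8)) = 2 * sin (π / 8) * cos (π / 8) := by
    rw [← sin_two_mul, show 2 * (π / 8) = π / 4 by ring, cos_pi_div_four, sin_pi_div_four]
  have hquot : cos (2 * (π / 8)) / (2 * cos (π / 8)) = sin (π / 8) := by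
    rw [hsin]
    field_simp
  rw [meanAngle, hquot, arcsin_sin (by linarith) (by linarith)]

lemma balancedDist_zero : balancedDist 0 = 0 := by
  rw [balancedDist, sin_zero, mul_zero]

lemma balancedDist_pi_div_eight : balancedDist (π / 8) = √2 := by
  calc balancedDist (π / 8) = 2 * sin (2 * (π / 8)) := by
        rw [balancedDist, meanAngle_pi_div_eight, sin_two_mul]
        ring
    _ = √2 := by
        rw [show 2 * (π / 8) = π / 4 by ring, sin_pi_div_four]
        ring

lemma antitoneOn_meanAngle : AntitoneOn meanAngle (Ico 0 (π / 2)) := by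
  intro a ha b hb hab
  have hcos_a : 0 < cos a := cos_pos_of_mem_Ioo ⟨by linarith [ha.1, pi_pos], ha.2⟩
  have hcos_b : 0 < cos b := cos_pos_of_mem_Ioo ⟨by linarith [hb.1, pi_pos], hb.2⟩
  have hcos : cos b ≤ cos a :=
    cos_le_cos_of_nonneg_of_le_pi ha.1 (by linarith [hb.2, pi_pos]) hab
  refine monotone_arcsin ?_
  rw [div_le_div_iff₀ (by positivity) (by positivity), cos_two_mul, cos_two_mul]
  have hfactor : 0 ≤ (cos a - cos b) * (2 * (cos a * cos b) + 1) :=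
    mul_nonneg (sub_nonneg.2 hcos) (by positivity)
  linarith

lemma antitoneOn_meanAngle_Icc : AntitoneOn meanAngle (Icc 0 (π / 8)) :=
  antitoneOn_meanAngle.mono (Icc_subset_Ico_right (by linarith [pi_pos]))

lemma meanAngle_mem_Icc (hh : h ∈ Icc 0 (π / 8)) : meanAngle h ∈ Icc (π / 8) (π / 6) := by
  have hle : (0 : ℝ) ≤ π / 8 := by positivity
  constructor
  · rw [← meanAngle_pi_div_eight]
    exact antitoneOn_meanAngle_Icc hh (right_mem_Icc.2 hle) hh.2
  · rw [← meanAngle_zero]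
    exact antitoneOn_meanAngle_Icc (left_mem_Icc.2 hle) hh hh.1

lemma cos_two_mul_div_mem_Ioo (hh : h ∈ Icc 0 (π / 8)) :
    cos (2 * h) / (2 * cos h) ∈ Ioo (-1) 1 := by
  have hm : arcsin (cos (2 * h) / (2 * cos h)) ∈ Icc (π / 8) (π / 6) := meanAngle_mem_Icc hh
  exact ⟨neg_pi_div_two_lt_arcsin.1 (by linarith [hm.1, pi_pos]),
    arcsin_lt_pi_div_two.1 (by linarith [hm.2, pi_pos])⟩

lemma two_mul_sin_meanAngle_mul_cos (hh : h ∈ Icc 0 (π / 8)) :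
    2 * sin (meanAngle h) * cos h = cos (2 * h) := by
  have hcos := cos_pos_of_mem_Icc_pi_div_eight hh
  have hquot := cos_two_mul_div_mem_Ioo hh
  rw [meanAngle, sin_arcsin hquot.1.le hquot.2.le]
  field_simp

lemma monotoneOn_balancedDist : MonotoneOn balancedDist (Icc 0 (π / 8)) := by
  intro a ha b hb hab
  have hpi := pi_pos
  have hma := meanAngle_mem_Icc ha
  have hmb := meanAngle_mem_Icc hb
  have hcos : cos (meanAngle a) ≤ cos (meanAngle b) :=
    cos_le_cos_of_nonneg_of_le_pi (by linarith [hmb.1]) (by linarith [hma.2])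
      (antitoneOn_meanAngle_Icc ha hb hab)
  have hsin : sin a ≤ sin b :=
    sin_le_sin_of_le_of_le_pi_div_two (by linarith [ha.1]) (by linarith [hb.2]) hab
  have hsin_a : 0 ≤ sin a := sin_nonneg_of_nonneg_of_le_pi ha.1 (by linarith [ha.2])
  have hcos_b : 0 ≤ cos (meanAngle b) := cos_arcsin_nonneg _
  unfold balancedDist
  gcongr

lemma surjOn_balancedDist : SurjOn balancedDist (Icc 0 (π / 8)) (Icc 0 (√2)) := by
  have hle : (0 : ℝ) ≤ π / 8 := by positivity
  have hquot : ContinuousOn (fun h => cos (2 * h) / (2 * cos h)) (Icc 0 (π / 8)) :=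
    ContinuousOn.div (by fun_prop) (by fun_prop) fun h hh =>
      mul_ne_zero two_ne_zero (cos_pos_of_mem_Icc_pi_div_eight hh).ne'
  have hmean : ContinuousOn meanAngle (Icc 0 (π / 8)) :=
    continuous_arcsin.comp_continuousOn hquot
  have hcont : ContinuousOn balancedDist (Icc 0 (π / 8)) := by
    unfold balancedDist
    fun_prop
  simpa only [balancedDist_zero, balancedDist_pi_div_eight] using
    hcont.surjOn_Icc (left_mem_Icc.2 hle) (right_mem_Icc.2 hle)

lemma four_mul_sin_meanAngle_sub (hh : h ∈ Icc 0 (π / 8)) :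
    4 * sin (meanAngle h - h) = 2 * cos (2 * h) - balancedDist h := by
  rw [sin_sub, ← two_mul_sin_meanAngle_mul_cos hh, balancedDist]
  ring

lemma four_mul_sin_meanAngle_add (hh : h ∈ Icc 0 (π / 8)) :
    4 * sin (meanAngle h + h) = 2 * cos (2 * h) + balancedDist h := by
  rw [sin_add, ← two_mul_sin_meanAngle_mul_cos hh, balancedDist]
  ring

lemma Lfun_balancedDist (hh : h ∈ Icc 0 (π / 8)) :
    Lfun (balancedDist h) 0 (π / 2 - 2 * h) = 3 * π - 4 * meanAngle h := by
  have ⟨hh₀, hh₈⟩ := hh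
  obtain ⟨hm₈, hm₆⟩ := meanAngle_mem_Icc hh
  have hsin : 0 ≤ sin (meanAngle h - h) := sin_nonneg_of_nonneg_of_le_pi (by linarith) (by linarith)
  rw [Lfun, dL_zero, sin_pi_div_two_sub, ← four_mul_sin_meanAngle_sub hh,
    abs_of_nonneg (by positivity), mul_div_cancel_left₀ _ four_ne_zero,
    arcsin_sin (by linarith) (by linarith)]
  ring

lemma Rfun_balancedDist (hh : h ∈ Icc 0 (π / 8)) :
    Rfun (balancedDist h) 0 (π / 2 - 2 * h) = 3 * π - 4 * meanAngle h := by
  have ⟨hh₀, hh₈⟩ := hh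
  obtain ⟨hm₈, hm₆⟩ := meanAngle_mem_Icc hh
  have hsin : 0 ≤ sin (meanAngle h + h) := sin_nonneg_of_nonneg_of_le_pi (by linarith) (by linarith)
  rw [Rfun, dR_zero, sin_pi_div_two_sub, ← four_mul_sin_meanAngle_add hh,
    abs_of_nonneg (by positivity), mul_div_cancel_left₀ _ four_ne_zero,
    arcsin_sin (by linarith) (by linarith)]
  ring

lemma balancedDist_div_two_le_cos_two_mul (hh : h ∈ Icc 0 (π / 8)) :
    balancedDist h / 2 ≤ cos (2 * h) := by
  have hm := meanAngle_mem_Icc hh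
  have hsin : 0 ≤ sin (meanAngle h - h) :=
    sin_nonneg_of_nonneg_of_le_pi (by linarith [hm.1, hh.2]) (by linarith [hm.2, hh.1, pi_pos])
  linarith [four_mul_sin_meanAngle_sub hh]

theorem Afun_balancedDist (hh : h ∈ Icc 0 (π / 8)) :
    Afun (balancedDist h) = 3 * π - 4 * meanAngle h := by
  have hhalf := balancedDist_div_two_le_cos_two_mul hh
  have hd₀ : 0 ≤ balancedDist h := by
    rw [← balancedDist_zero]
    exact monotoneOn_balancedDist (left_mem_Icc.2 (hh.1.trans hh.2)) hh hh.1
  have hδ₀ : arcsin (balancedDist h / 2) ≤ π / 2 - 2 * h := by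
    calc arcsin (balancedDist h / 2) ≤ arcsin (sin (π / 2 - 2 * h)) :=
          monotone_arcsin (by rwa [sin_pi_div_two_sub])
      _ = π / 2 - 2 * h := arcsin_sin (by linarith [hh.2, pi_pos]) (by linarith [hh.1])
  rw [← Lfun_balancedDist hh]
  exact Afun_eq_of_Lfun_eq_Rfun hd₀ (by linarith [cos_le_one (2 * h)]) ⟨hδ₀, by linarith [hh.1]⟩
    ((Lfun_balancedDist hh).trans (Rfun_balancedDist hh).symm)

lemma hasDerivAt_meanAngle (hh : h ∈ Icc 0 (π / 8)) :
    HasDerivAt meanAngle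
      (-(sin h * (1 + 2 * cos h ^ 2) / (2 * cos h ^ 2 * cos (meanAngle h)))) h := by
  have hcos := cos_pos_of_mem_Icc_pi_div_eight hh
  have hquot := cos_two_mul_div_mem_Ioo hh
  have hnum : HasDerivAt (fun h => cos (2 * h)) (-sin (2 * h) * (2 * 1)) h :=
    ((hasDerivAt_id h).const_mul 2).cos
  have hden : HasDerivAt (fun h => 2 * cos h) (2 * -sin h) h := (hasDerivAt_cos h).const_mul 2
  have hcomp := (hasDerivAt_arcsin hquot.1.ne' hquot.2.ne).comp h (hnum.div hden (by positivity))
  refine hcomp.congr_deriv ?_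
  rw [← cos_arcsin, ← meanAngle, sin_two_mul, cos_two_mul]
  field_simp
  ring

lemma hasDerivAt_balancedDist_add_four_mul_meanAngle {m' : ℝ} (hm' : HasDerivAt meanAngle m' h) :
    HasDerivAt (fun h => balancedDist h + 4 * meanAngle h)
      (4 * (cos (meanAngle h) * cos h + m' * (1 - sin (meanAngle h) * sin h))) h := by
  refine (((hm'.cos.const_mul 4).mul (hasDerivAt_sin h)).add (hm'.const_mul 4)).congr_deriv ?_
  ring

lemma two_mul_sin_mul_le_three_mul_cos_pow_three (hh : h ∈ Icc 0 (π / 8)) :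
    2 * (sin h * (1 + 2 * cos h ^ 2)) ≤ 3 * cos h ^ 3 := by
  have hcos := cos_pos_of_mem_Icc_pi_div_eight hh
  have hcos_two : √2 / 2 ≤ cos (2 * h) := by
    rw [← cos_pi_div_four]
    exact cos_le_cos_of_nonneg_of_le_pi (by linarith [hh.1]) (by linarith [pi_pos])
      (by linarith [hh.2])
  have hsqrt : 4 / 3 ≤ √2 := le_sqrt_of_sq_le (by norm_num)
  have htan_sq : 5 * sin h ^ 2 ≤ cos h ^ 2 := by
    rw [cos_two_mul] at hcos_two
    linarith [sin_sq_add_cos_sq h]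
  have htan : sin h ≤ 9 / 20 * cos h :=
    le_of_sq_le_sq (by linarith [sq_nonneg (cos h)]) (by positivity)
  have hone : 1 + 2 * cos h ^ 2 ≤ 16 / 5 * cos h ^ 2 := by linarith [sin_sq_add_cos_sq h]
  have hmul := mul_le_mul htan hone (by positivity) (by positivity)
  linarith [pow_pos hcos 3]

lemma three_fourths_le_sq_cos_meanAngle (hh : h ∈ Icc 0 (π / 8)) :
    3 / 4 ≤ cos (meanAngle h) ^ 2 := by
  have hm := meanAngle_mem_Icc hh
  have hcos : cos (π / 6) ≤ cos (meanAngle h) :=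
    cos_le_cos_of_nonneg_of_le_pi (by linarith [hm.1, pi_pos]) (by linarith [pi_pos]) hm.2
  rw [← sq_cos_pi_div_six]
  exact pow_le_pow_left₀ (cos_pi_div_six ▸ by positivity) hcos 2

lemma monotoneOn_balancedDist_add_four_mul_meanAngle :
    MonotoneOn (fun h => balancedDist h + 4 * meanAngle h) (Icc 0 (π / 8)) := by
  have hderiv (h : ℝ) (hh : h ∈ Icc 0 (π / 8)) :=
    hasDerivAt_balancedDist_add_four_mul_meanAngle (hasDerivAt_meanAngle hh)
  refine monotoneOn_of_hasDerivWithinAt_nonneg (convex_Icc _ _)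
    (fun h hh => (hderiv h hh).continuousAt.continuousWithinAt)
    (fun h hh => (hderiv h (interior_subset hh)).hasDerivWithinAt) fun h hint => ?_
  have hh := interior_subset hint
  have hm := meanAngle_mem_Icc hh
  have hcos := cos_pos_of_mem_Icc_pi_div_eight hh
  have hsin : 0 ≤ sin h := sin_nonneg_of_nonneg_of_le_pi hh.1 (by linarith [hh.2, pi_pos])
  have hsin_m : 0 ≤ sin (meanAngle h) :=
    sin_nonneg_of_nonneg_of_le_pi (by linarith [hm.1, pi_pos]) (by linarith [hm.2, pi_pos])
  have hcos_m : 0 < cos (meanAngle h) :=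
    cos_pos_of_mem_Ioo ⟨by linarith [hm.1, pi_pos], by linarith [hm.2, pi_pos]⟩
  set slope := sin h * (1 + 2 * cos h ^ 2) / (2 * cos h ^ 2 * cos (meanAngle h)) with hslope
  have hslope_nonneg : 0 ≤ slope := by positivity
  have hslope_le : slope ≤ cos (meanAngle h) * cos h := by
    rw [hslope, div_le_iff₀ (by positivity)]
    have hmul := mul_le_mul_of_nonneg_left (three_fourths_le_sq_cos_meanAngle hh)
      (pow_pos hcos 3).le
    linarith [two_mul_sin_mul_le_three_mul_cos_pow_three hh]
  have hprod : 0 ≤ slope * (sin (meanAngle h) * sin h) :=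
    mul_nonneg hslope_nonneg (mul_nonneg hsin_m hsin)
  linarith

end Parametrization

/-- On `[0, √2]` the function `d ↦ A(d)` is monotonically
increasing and `d ↦ A(d) - d` is monotonically decreasing; moreover
`A(0) = 7π/3` and `A(√2) = 5π/2`. -/
theorem A_monotonicity :
    MonotoneOn Afun (Set.Icc 0 (Real.sqrt 2)) ∧
    AntitoneOn (fun d => Afun d - d) (Set.Icc 0 (Real.sqrt 2)) ∧
    Afun 0 = 7 * π / 3 ∧ Afun (Real.sqrt 2) = 5 * π / 2 := by
  have hmono := monotoneOn_balancedDist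
  have hsurj := surjOn_balancedDist
  refine ⟨monotoneOn_of_monotoneOn_comp hmono hsurj fun a ha b hb hab => ?_,
    antitoneOn_of_antitoneOn_comp hmono hsurj fun a ha b hb hab => ?_, ?_, ?_⟩
  · have hangle := antitoneOn_meanAngle_Icc ha hb hab
    simp only [Function.comp_apply, Afun_balancedDist ha, Afun_balancedDist hb]
    linarith
  · have hsum := monotoneOn_balancedDist_add_four_mul_meanAngle ha hb hab
    simp only [Function.comp_apply, Afun_balancedDist ha, Afun_balancedDist hb] at hsum ⊢
    linarith
  · rw [← balancedDist_zero, Afun_balancedDist (left_mem_Icc.2 (by positivity)), meanAngle_zero]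
    ring
  · rw [← balancedDist_pi_div_eight, Afun_balancedDist (right_mem_Icc.2 (by positivity)),
      meanAngle_pi_div_eight]
    ring
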